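/- Let n, m ≥ 1, let D be an n×n real matrix, and let α, β, h be strictly positive reals such that every root s ∈ ℂ of the characteristic polynomial of D satisfies s ≠ 1, β < θ(s), and h < 2β²(θ(s) − β)/(α(ϑ(s)² + β²)), where θ(s) = Re(2/(1 − s)) and ϑ(s) = Im(2/(1 − s)). Let γ₁, γ₂ ≥ 0 and let ε₀, υ₀, a₀ : ℝ → ℝᵐ satisfy: ε₀ is differentiable with derivative υ₀, υ₀ is differentiable with derivative a₀, ‖υ₀(t)‖_∞ ≤ γ₁ and ‖a₀(t)‖_∞ ≤ γ₂ for all t. Fix t₀ ∈ ℝ and set t_k = t₀ + kh. Then there exists a constant C > 0, depending only on n, D, α, β, and h, such that for every pair of sequences ε̄, ῡ : ℕ → (ℝᵐ)ⁿ satisfying, for all k ≥ 1 and all i ∈ {1, …, n}, ε̄_i(k+1) = Σ_j [(1−αh)I + αhD]_{ij} ε̄_j(k) + h·Σ_j [(1−β)I + βD]_{ij} ῡ_j(k) + ε₀(t_k) − ε₀(t_{k+1}) + h·υ₀(t_k) and ῡ_i(k+1) = α·Σ_j [D − I]_{ij} ε̄_j(k) + Σ_j [(1−β)I + βD]_{ij}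 ῡ_j(k) + υ₀(t_k) − υ₀(t_{k+1}), one has limsup_{k→∞} max_i ‖ε̄_i(k)‖_∞ ≤ C·h·max(2γ₁, γ₂) and limsup_{k→∞} max_i ‖ῡ_i(k)‖_∞ ≤ C·h·max(2γ₁, γ₂). -/

import Mathlib

/-!
Let `Γ` be the block matrix of the error recursion. If `z ≠ 0` is an eigenvalue of `Γ` with
eigenvector `(x, y)`, then `(z - 1) x = h z y`, because without noise the position error moves by
`h` times the *new* velocity error. Hence `x` is an eigenvector of `D`, with an eigenvalue `s` such
that `(1 - s) (α h z + β (z - 1)) = -(z - 1) ^ 2`. If `1 ≤ ‖z‖`, then `q = (z - 1)⁻¹` lies in the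
half-plane `-1 / 2 ≤ Re q`. Written in terms of `q`, the difference of the two sides of the
sampling-period condition factors explicitly, and it has the wrong sign on that half-plane. So the
spectral radius of `Γ` is less than `1`, the norms of its powers are summable, and a noise of size
`O(h)` accumulates to an error of size `O(h)`.
-/

open Filter Topology
open scoped Matrix Matrix.Module

section PerturbedRecursion

variable {R M : Type*} [SeminormedRing R] [SeminormedAddCommGroup M] [Module R M]
  [IsBoundedSMul R M] {a : R} {x d : ℕ → M} {δ : ℝ}

lemma norm_sub_pow_smul_le_sum (hx : ∀ k, x (k + 1) = a • x k + d k) (hd : ∀ k, ‖d k‖ ≤ δ)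
    (k : ℕ) : ‖x k - a ^ k • x 0‖ ≤ (∑ j ∈ Finset.range k, ‖a ^ j‖) * δ := by
  induction k generalizing x d with
  | zero => simp
  | succ k ih =>
    have hsplit : x (k + 1) - a ^ (k + 1) • x 0 =
        (x (k + 1) - a ^ k • x (0 + 1)) + a ^ k • d 0 := by
      rw [hx 0, smul_add, ← mul_smul, ← pow_succ]
      abel
    rw [hsplit, Finset.sum_range_succ, add_mul]
    exact norm_add_le_of_le
      (ih (x := fun k => x (k + 1)) (d := fun k => d (k + 1)) (fun k => hx (k + 1))
        fun k => hd (k + 1))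
      ((norm_smul_le _ _).trans (by gcongr; exact hd 0))

lemma eventually_norm_lt_of_summable_norm_pow (ha : Summable fun k => ‖a ^ k‖)
    (hx : ∀ᶠ k in atTop, x (k + 1) = a • x k + d k) (hd : ∀ᶠ k in atTop, ‖d k‖ ≤ δ) {b : ℝ}
    (hb : (∑' k, ‖a ^ k‖) * δ < b) : ∀ᶠ k in atTop, ‖x k‖ < b := by
  obtain ⟨N, hN⟩ := eventually_atTop.1 (hx.and hd)
  have hδ : 0 ≤ δ := (norm_nonneg _).trans (hN N le_rfl).2
  have hlim : Tendsto (fun k => (∑' j, ‖a ^ j‖) * δ + ‖a ^ k‖ * ‖x N‖) atTop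
      (𝓝 ((∑' j, ‖a ^ j‖) * δ)) := by
    simpa using (ha.tendsto_atTop_zero.mul_const ‖x N‖).const_add ((∑' j, ‖a ^ j‖) * δ)
  rw [← map_add_atTop_eq_nat N, eventually_map]
  filter_upwards [hlim.eventually_lt_const hb] with k hk
  have hdrift : ‖x (k + N) - a ^ k • x N‖ ≤ (∑ j ∈ Finset.range k, ‖a ^ j‖) * δ := by
    simpa only [zero_add] using norm_sub_pow_smul_le_sum (x := fun k => x (k + N))
      (d := fun k => d (k + N))
      (fun k => by simpa only [add_right_comm] using (hN (k + N) (Nat.le_add_left N k)).1)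
      (fun k => (hN (k + N) (Nat.le_add_left N k)).2) k
  calc ‖x (k + N)‖ = ‖(x (k + N) - a ^ k • x N) + a ^ k • x N‖ := by rw [sub_add_cancel]
    _ ≤ (∑ j ∈ Finset.range k, ‖a ^ j‖) * δ + ‖a ^ k‖ * ‖x N‖ :=
      norm_add_le_of_le hdrift (norm_smul_le _ _)
    _ ≤ (∑' j, ‖a ^ j‖) * δ + ‖a ^ k‖ * ‖x N‖ := by
      gcongr
      exact ha.sum_le_tsum _ fun _ _ => norm_nonneg _
    _ < b := hk

end PerturbedRecursion

lemma limsup_norm_le_of_forall_eventually_lt {X F : Type*} [SeminormedAddCommGroup F]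
    {f : Filter X} [f.NeBot] {u : X → F} {B : ℝ} (hu : ∀ b > B, ∀ᶠ k in f, ‖u k‖ < b) :
    limsup (fun k => ‖u k‖) f ≤ B :=
  le_of_forall_gt_imp_ge_of_dense fun b hb =>
    limsup_le_of_le (isCoboundedUnder_le_of_le f fun _ => norm_nonneg _)
      ((hu b hb).mono fun _ => le_of_lt)

lemma summable_norm_pow_of_spectralRadius_lt_one {A : Type*} [NormedRing A] [NormedAlgebra ℂ A]
    [CompleteSpace A] {a : A} (ha : spectralRadius ℂ a < 1) : Summable fun k => ‖a ^ k‖ := by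
  obtain ⟨r, har, hr⟩ := ENNReal.lt_iff_exists_nnreal_btwn.1 ha
  have hgelfand := spectrum.pow_nnnorm_pow_one_div_tendsto_nhds_spectralRadius a
  refine Summable.of_norm_bounded_eventually_nat
    (summable_geometric_of_lt_one r.2 (mod_cast hr)) ?_
  filter_upwards [hgelfand.eventually_lt_const har, eventually_gt_atTop 0] with k hk hk0
  rw [one_div, ENNReal.rpow_inv_lt_iff (mod_cast hk0), ENNReal.rpow_natCast] at hk
  rw [norm_norm]
  exact mod_cast hk.le

section MatrixNorm

variable {ι : Type*} [Fintype ι] [DecidableEq ι]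

attribute [local instance] Matrix.linftyOpNormedRing Matrix.linftyOpNormedAlgebra

lemma linfty_opNorm_smul_le {R E : Type*} [NormedRing R] [NormedAddCommGroup E] [Module R E]
    [IsBoundedSMul R E] (A : Matrix ι ι R) (v : ι → E) : ‖A • v‖ ≤ ‖A‖ * ‖v‖ := by
  refine (pi_norm_le_iff_of_nonneg (by positivity)).2 fun i => ?_
  have hrow : ∑ j, ‖A i j‖ ≤ ‖A‖ := by
    rw [Matrix.linfty_opNorm_def]
    simp_rw [← coe_nnnorm, ← NNReal.coe_sum]
    exact NNReal.coe_le_coe.2 <| Finset.le_sup (f := fun i => ∑ j, ‖A i j‖₊) (Finset.mem_univ i)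
  calc ‖∑ j, A i j • v j‖ ≤ ∑ j, ‖A i j‖ * ‖v‖ :=
        norm_sum_le_of_le _ fun j _ =>
          (norm_smul_le _ _).trans (by gcongr; exact norm_le_pi_norm v j)
    _ = (∑ j, ‖A i j‖) * ‖v‖ := (Finset.sum_mul ..).symm
    _ ≤ ‖A‖ * ‖v‖ := by gcongr

lemma limsup_norm_le_of_sumElim_eq_smul_add {κ R E : Type*} [Fintype κ] [DecidableEq κ]
    [NormedRing R] [NormedAddCommGroup E] [Module R E] [IsBoundedSMul R E]
    {A : Matrix (ι ⊕ κ) (ι ⊕ κ) R} {x : ℕ → ι → E} {y : ℕ → κ → E} {d : ℕ → ι ⊕ κ → E} {δ : ℝ}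
    (hA : Summable fun k => ‖A ^ k‖)
    (hxy : ∀ᶠ k in atTop, Sum.elim (x (k + 1)) (y (k + 1)) = A • Sum.elim (x k) (y k) + d k)
    (hd : ∀ᶠ k in atTop, ‖d k‖ ≤ δ) :
    limsup (fun k => ‖x k‖) atTop ≤ (∑' k, ‖A ^ k‖) * δ ∧
      limsup (fun k => ‖y k‖) atTop ≤ (∑' k, ‖A ^ k‖) * δ := by
  have : IsBoundedSMul (Matrix (ι ⊕ κ) (ι ⊕ κ) R) (ι ⊕ κ → E) :=
    .of_norm_smul_le linfty_opNorm_smul_le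
  have hlt (b : ℝ) (hb : (∑' k, ‖A ^ k‖) * δ < b) : ∀ᶠ k in atTop, ‖Sum.elim (x k) (y k)‖ < b :=
    eventually_norm_lt_of_summable_norm_pow (x := fun k => Sum.elim (x k) (y k)) hA hxy hd hb
  exact ⟨limsup_norm_le_of_forall_eventually_lt fun b hb => (hlt b hb).mono fun k hk =>
      (pi_norm_comp_le (Sum.elim (x k) (y k)) Sum.inl).trans_lt hk,
    limsup_norm_le_of_forall_eventually_lt fun b hb => (hlt b hb).mono fun k hk =>
      (pi_norm_comp_le (Sum.elim (x k) (y k)) Sum.inr).trans_lt hk⟩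

lemma summable_norm_pow_of_forall_mem_spectrum_map_ofReal (A : Matrix ι ι ℝ)
    (hA : ∀ z ∈ spectrum ℂ (A.map ((↑) : ℝ → ℂ)), ‖z‖ < 1) : Summable fun k => ‖A ^ k‖ := by
  have : CompleteSpace (Matrix ι ι ℂ) := FiniteDimensional.complete ℂ _
  have hnorm (k : ℕ) : ‖A ^ k‖ = ‖A.map ((↑) : ℝ → ℂ) ^ k‖ := by
    have hmap : (A ^ k).map ((↑) : ℝ → ℂ) = A.map ((↑) : ℝ → ℂ) ^ k :=
      map_pow Complex.ofRealHom.mapMatrix A k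
    simp [← hmap, Matrix.linfty_opNorm_def]
  simp_rw [hnorm]
  apply summable_norm_pow_of_spectralRadius_lt_one
  rcases (spectrum ℂ (A.map ((↑) : ℝ → ℂ))).eq_empty_or_nonempty with hempty | hne
  · simp [spectralRadius, hempty]
  · exact spectrum.spectralRadius_lt_of_forall_lt_of_nonempty hne hA

end MatrixNorm

lemma mem_spectrum_iff_exists_mulVec_eq_smul {ι K : Type*} [Fintype ι] [DecidableEq ι] [Field K]
    {A : Matrix ι ι K} {μ : K} : μ ∈ spectrum K A ↔ ∃ v ≠ 0, A *ᵥ v = μ • v := by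
  rw [← Matrix.spectrum_toLin', ← Module.End.hasEigenvalue_iff_mem_spectrum]
  refine ⟨fun hμ => ?_, fun ⟨v, hv, hAv⟩ => ?_⟩
  · obtain ⟨v, hv⟩ := hμ.exists_hasEigenvector
    exact ⟨v, hv.2, hv.apply_eq_smul⟩
  · exact Module.End.hasEigenvalue_of_hasEigenvector (Module.End.hasEigenvector_iff.2
      ⟨Module.End.mem_eigenspace_iff.2 hAv, hv⟩)

section ErrorMatrix

variable {ι K : Type*} [DecidableEq ι]

/-- The block matrix `Γ` of the error recursion: it sends the pair (position errors, velocity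
errors) at one sampling time to the noiseless pair at the next one. -/
def errorMatrix [Ring K] (D : Matrix ι ι K) (α β h : K) : Matrix (ι ⊕ ι) (ι ⊕ ι) K :=
  Matrix.fromBlocks ((1 - α * h) • 1 + (α * h) • D) (h • ((1 - β) • 1 + β • D))
    (α • (D - 1)) ((1 - β) • 1 + β • D)

lemma errorMatrix_map {L : Type*} [Ring K] [Ring L] (f : K →+* L) (D : Matrix ι ι K) (α β h : K) :
    (errorMatrix D α β h).map f = errorMatrix (D.map f) (f α) (f β) (f h) := by
  rw [errorMatrix, errorMatrix, Matrix.fromBlocks_map]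
  congr 1 <;> ext i j <;> by_cases hij : i = j <;> simp [hij, mul_add]

variable [Fintype ι]

lemma errorMatrix_mulVec_elim [CommRing K] (D : Matrix ι ι K) (α β h : K) (x y : ι → K) :
    errorMatrix D α β h *ᵥ Sum.elim x y =
      Sum.elim (x + h • (y + (D - 1) *ᵥ (α • x + β • y))) (y + (D - 1) *ᵥ (α • x + β • y)) := by
  rw [errorMatrix, Matrix.fromBlocks_mulVec, Sum.elim_comp_inl, Sum.elim_comp_inr]
  simp only [Matrix.add_mulVec, Matrix.sub_mulVec, Matrix.smul_mulVec, Matrix.one_mulVec,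
    Matrix.mulVec_add, Matrix.mulVec_smul]
  congr 1 <;> module

lemma errorMatrix_smul_elim [Ring K] {E : Type*} [AddCommGroup E] [Module K E]
    (D : Matrix ι ι K) (α β h : K) (x y : ι → E) :
    errorMatrix D α β h • Sum.elim x y =
      Sum.elim
        (fun i => (∑ j, ((1 - α * h) • (1 : Matrix ι ι K) + (α * h) • D) i j • x j) +
          h • ∑ j, ((1 - β) • (1 : Matrix ι ι K) + β • D) i j • y j)
        (fun i => α • (∑ j, (D - 1) i j • x j) +
          ∑ j, ((1 - β) • (1 : Matrix ι ι K) + β • D) i j • y j) := by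
  ext (i | i) <;> rw [Matrix.Module.smul_apply, Fintype.sum_sum_type] <;>
    simp [errorMatrix, Finset.smul_sum, smul_smul, mul_add, mul_assoc]

lemma exists_mem_spectrum_of_mem_spectrum_errorMatrix [Field K] {D : Matrix ι ι K} {α β h z : K}
    (hα : α ≠ 0) (hh : h ≠ 0) (hz0 : z ≠ 0) (hz : z ∈ spectrum K (errorMatrix D α β h)) :
    ∃ s ∈ spectrum K D, (1 - s) * (α * h * z + β * (z - 1)) = -(z - 1) ^ 2 := by
  obtain ⟨v, hv, hvz⟩ := mem_spectrum_iff_exists_mulVec_eq_smul.1 hz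
  obtain ⟨x, y, rfl⟩ : ∃ x y, v = Sum.elim x y := ⟨_, _, (Sum.elim_comp_inl_inr v).symm⟩
  rw [errorMatrix_mulVec_elim] at hvz
  have hvel : y + (D - 1) *ᵥ (α • x + β • y) = z • y := congrArg (· ∘ Sum.inr) hvz
  have hpos : x + h • z • y = z • x := by
    rw [← hvel]
    exact congrArg (· ∘ Sum.inl) hvz
  have hxy : (z - 1) • x = (h * z) • y := by
    rw [sub_smul, ← hpos]
    module
  have hx : x ≠ 0 := by
    rintro rfl
    have hy : y = 0 := by simpa [hh, hz0] using hxy.symm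
    simp [hy] at hv
  set q := α * h * z + β * (z - 1) with hq
  have hquad : (z - 1) ^ 2 • x = q • (D - 1) *ᵥ x :=
    calc (z - 1) ^ 2 • x = (z - 1) • (h * z) • y := by rw [← hxy]; module
      _ = (h * z) • (z • y - y) := by module
      _ = (h * z) • (D - 1) *ᵥ (α • x + β • y) := by rw [← hvel, add_sub_cancel_left]
      _ = (D - 1) *ᵥ ((α * h * z) • x + β • (h * z) • y) := by
        rw [← Matrix.mulVec_smul]; congr 1; module
      _ = q • (D - 1) *ᵥ x := by rw [← hxy, ← Matrix.mulVec_smul]; congr 1; module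
  have hq0 : q ≠ 0 := by
    intro hq0
    have hz1 : z = 1 := by simpa [hq0, hx, sub_eq_zero] using hquad
    simp [hq, hz1, hα, hh] at hq0
  refine ⟨1 + (z - 1) ^ 2 / q, mem_spectrum_iff_exists_mulVec_eq_smul.2 ⟨x, hx, ?_⟩, ?_⟩
  · have hDx : (D - 1) *ᵥ x = ((z - 1) ^ 2 / q) • x := by
      rw [div_eq_inv_mul, mul_smul, hquad, inv_smul_smul₀ hq0]
    rw [add_smul, one_smul, ← hDx, Matrix.sub_mulVec, Matrix.one_mulVec, add_sub_cancel]
  · field_simp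
    ring

end ErrorMatrix

/-- The hypotheses of Theorem 4 on an eigenvalue `s` of the interaction matrix: `β < θ(s)` and the
sampling-period condition (5.2), where `θ(s)` and `ϑ(s)` are the real and imaginary parts of
`2 / (1 - s)`. -/
def SamplingCondition (α β h : ℝ) (s : ℂ) : Prop :=
  s ≠ 1 ∧ β < (2 / (1 - s)).re ∧
    h < 2 * β ^ 2 * ((2 / (1 - s)).re - β) / (α * ((2 / (1 - s)).im ^ 2 + β ^ 2))

lemma neg_half_le_re_inv_sub_one {z : ℂ} (hz : 1 ≤ ‖z‖) : -1 / 2 ≤ ((z - 1)⁻¹).re := by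
  rcases eq_or_ne z 1 with rfl | hz1
  · norm_num
  have hpos : 0 < Complex.normSq (z - 1) := Complex.normSq_pos.2 (sub_ne_zero.2 hz1)
  have hz2 : 1 ≤ Complex.normSq z := by
    rw [Complex.normSq_eq_norm_sq]
    exact one_le_pow₀ hz
  rw [Complex.inv_re, le_div_iff₀ hpos]
  simp only [Complex.normSq_apply, Complex.sub_re, Complex.sub_im, Complex.one_re,
    Complex.one_im] at hz2 ⊢
  linarith

-- Here `c` stands for `α * h`, and `-2 * (c * (q + q ^ 2) + β * q)` is `2 / (1 - s)` written in
-- terms of `q = (z - 1)⁻¹`.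
lemma samplingGap_eq (c β : ℝ) (q : ℂ) :
    c * ((-2 * (c * (q + q ^ 2) + β * q)).im ^ 2 + β ^ 2) -
        2 * β ^ 2 * ((-2 * (c * (q + q ^ 2) + β * q)).re - β) =
      4 * (q.re + 1 / 2) * (c * (q.re + 1 / 2) + β) * (4 * c ^ 2 * q.im ^ 2 + β ^ 2) := by
  simp only [pow_two, Complex.mul_im, Complex.mul_re, Complex.add_im, Complex.add_re,
    Complex.ofReal_re, Complex.ofReal_im, Complex.neg_re, Complex.neg_im, Complex.re_ofNat,
    Complex.im_ofNat]
  ring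

lemma SamplingCondition.norm_lt_one {α β h : ℝ} (hα : 0 < α) (hβ : 0 < β) (hh : 0 < h) {s z : ℂ}
    (hs : SamplingCondition α β h s)
    (hz : (1 - s) * (α * h * z + β * (z - 1)) = -(z - 1) ^ 2) : ‖z‖ < 1 := by
  obtain ⟨hs1, -, hgap⟩ := hs
  have hs0 : 1 - s ≠ 0 := sub_ne_zero.2 hs1.symm
  have hz1 : z - 1 ≠ 0 := by
    intro hz1
    have hz_one : z = 1 := sub_eq_zero.1 hz1
    simp [hz_one, hs0, hα.ne', hh.ne'] at hz
  set q := (z - 1)⁻¹ with hq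
  have htwo : 2 / (1 - s) = -2 * ((α * h : ℝ) * (q + q ^ 2) + β * q) := by
    have hzq : z = q⁻¹ + 1 := by rw [hq, inv_inv, sub_add_cancel]
    have hq0 : q ≠ 0 := inv_ne_zero hz1
    rw [div_eq_iff hs0]
    push_cast
    rw [hzq] at hz
    field_simp at hz
    linear_combination 2 * hz
  rw [lt_div_iff₀ (by positivity), ← mul_assoc, mul_comm h α, htwo] at hgap
  by_contra! hnorm
  have hre : 0 ≤ q.re + 1 / 2 := by linarith [neg_half_le_re_inv_sub_one hnorm]
  have hfactor : 0 ≤ 4 * (q.re + 1 / 2) * (α * h * (q.re + 1 / 2) + β) *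
      (4 * (α * h) ^ 2 * q.im ^ 2 + β ^ 2) := by positivity
  linarith [samplingGap_eq (α * h) β q]

section TargetNoise

variable {ι E : Type*} [NormedAddCommGroup E] [NormedSpace ℝ E]

lemma norm_sub_add_le_of_norm_hasDerivAt_le {f f' : ℝ → E} {γ h : ℝ}
    (hf : ∀ t, HasDerivAt f (f' t) t) (hγ : ∀ t, ‖f' t‖ ≤ γ) (hh : 0 ≤ h) (t : ℝ) :
    ‖f t - f (t + h)‖ ≤ h * γ := by
  simpa [abs_of_nonneg hh, mul_comm, norm_sub_rev] using
    convex_univ.norm_image_sub_le_of_norm_hasDerivWithin_le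
      (fun u _ => (hf u).hasDerivWithinAt) (fun u _ => hγ u) (Set.mem_univ t) (Set.mem_univ (t + h))

/-- The noise in the error recursion over the sampling interval `[t, t + h]`: what the motion of the
target `(ε₀, υ₀)` adds to the position errors (first block) and to the velocity errors (second
block), the same for every index in `ι`. -/
def targetNoise (ι : Type*) (ε₀ υ₀ : ℝ → E) (h t : ℝ) : ι ⊕ ι → E :=
  Sum.elim (fun _ => ε₀ t - ε₀ (t + h) + h • υ₀ t) fun _ => υ₀ t - υ₀ (t + h)

lemma norm_targetNoise_le [Fintype ι] {ε₀ υ₀ a₀ : ℝ → E} {γ₁ γ₂ h : ℝ}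
    (hε : ∀ t, HasDerivAt ε₀ (υ₀ t) t) (hυ : ∀ t, HasDerivAt υ₀ (a₀ t) t)
    (hγ₁ : ∀ t, ‖υ₀ t‖ ≤ γ₁) (hγ₂ : ∀ t, ‖a₀ t‖ ≤ γ₂) (hh : 0 ≤ h) (t : ℝ) :
    ‖targetNoise ι ε₀ υ₀ h t‖ ≤ h * max (2 * γ₁) γ₂ := by
  have hγ₂0 : 0 ≤ γ₂ := (norm_nonneg _).trans (hγ₂ t)
  refine (pi_norm_le_iff_of_nonneg (by positivity)).2 ?_
  rintro (_ | _)
  · calc ‖ε₀ t - ε₀ (t + h) + h • υ₀ t‖ ≤ h * γ₁ + h * γ₁ :=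
          norm_add_le_of_le (norm_sub_add_le_of_norm_hasDerivAt_le hε hγ₁ hh t)
            (by rw [norm_smul, Real.norm_of_nonneg hh]; gcongr; exact hγ₁ t)
      _ = h * (2 * γ₁) := by ring
      _ ≤ h * max (2 * γ₁) γ₂ := by gcongr; exact le_max_left _ _
  · calc ‖υ₀ t - υ₀ (t + h)‖ ≤ h * γ₂ := norm_sub_add_le_of_norm_hasDerivAt_le hυ hγ₂ hh t
      _ ≤ h * max (2 * γ₁) γ₂ := by gcongr; exact le_max_right _ _

end TargetNoise

section Estimator

variable {ι : Type*} [Fintype ι] [DecidableEq ι]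

attribute [local instance] Matrix.linftyOpNormedRing

lemma summable_norm_pow_errorMatrix {D : Matrix ι ι ℝ} {α β h : ℝ} (hα : 0 < α) (hβ : 0 < β)
    (hh : 0 < h)
    (hD : ∀ s ∈ spectrum ℂ (D.map ((↑) : ℝ → ℂ)), SamplingCondition α β h s) :
    Summable fun k => ‖errorMatrix D α β h ^ k‖ := by
  refine summable_norm_pow_of_forall_mem_spectrum_map_ofReal _ fun z hz => ?_
  rcases eq_or_ne z 0 with rfl | hz0
  · simp
  obtain ⟨s, hsD, hs⟩ := exists_mem_spectrum_of_mem_spectrum_errorMatrix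
    (Complex.ofReal_ne_zero.2 hα.ne') (Complex.ofReal_ne_zero.2 hh.ne') hz0
    (errorMatrix_map Complex.ofRealHom D α β h ▸ hz)
  exact (hD s hsD).norm_lt_one hα hβ hh hs

theorem stmt_18_general (D : Matrix ι ι ℝ) {α β h : ℝ} (hα : 0 < α) (hβ : 0 < β) (hh : 0 < h)
    (hD : ∀ s ∈ spectrum ℂ (D.map ((↑) : ℝ → ℂ)), SamplingCondition α β h s) :
    ∃ C > 0, ∀ (E : Type*) [NormedAddCommGroup E] [NormedSpace ℝ E] (γ₁ γ₂ : ℝ)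
      (ε₀ υ₀ a₀ : ℝ → E),
        (∀ t, HasDerivAt ε₀ (υ₀ t) t) → (∀ t, HasDerivAt υ₀ (a₀ t) t) →
        (∀ t, ‖υ₀ t‖ ≤ γ₁) → (∀ t, ‖a₀ t‖ ≤ γ₂) →
      ∀ (t₀ : ℝ) (t : ℕ → ℝ), (∀ k, t k = t₀ + k * h) →
      ∀ (εb υb : ℕ → ι → E),
        (∀ k, 1 ≤ k → ∀ i, εb (k + 1) i =
          (∑ j, ((1 - α * h) • (1 : Matrix ι ι ℝ) + (α * h) • D) i j • εb k j)
            + h • (∑ j, ((1 - β) • (1 : Matrix ι ι ℝ) + β • D) i j • υb k j)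
            + (ε₀ (t k) - ε₀ (t (k + 1)) + h • υ₀ (t k))) →
        (∀ k, 1 ≤ k → ∀ i, υb (k + 1) i =
          α • (∑ j, (D - 1) i j • εb k j)
            + (∑ j, ((1 - β) • (1 : Matrix ι ι ℝ) + β • D) i j • υb k j)
            + (υ₀ (t k) - υ₀ (t (k + 1)))) →
        limsup (fun k => ‖εb k‖) atTop ≤ C * h * max (2 * γ₁) γ₂ ∧
          limsup (fun k => ‖υb k‖) atTop ≤ C * h * max (2 * γ₁) γ₂ := by
  set S := ∑' k, ‖errorMatrix D α β h ^ k‖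
  have hS : 0 ≤ S := tsum_nonneg fun _ => norm_nonneg _
  refine ⟨S + 1, add_pos_of_nonneg_of_pos hS one_pos, ?_⟩
  intro E _ _ γ₁ γ₂ ε₀ υ₀ a₀ hε hυ hγ₁ hγ₂ t₀ t ht εb υb hεb hυb
  have hnoise (k : ℕ) : ‖targetNoise ι ε₀ υ₀ h (t k)‖ ≤ h * max (2 * γ₁) γ₂ :=
    norm_targetNoise_le hε hυ hγ₁ hγ₂ hh.le (t k)
  have hstep (k : ℕ) : t (k + 1) = t k + h := by rw [ht, ht]; push_cast; ring
  have hrec (k : ℕ) (hk : 1 ≤ k) : Sum.elim (εb (k + 1)) (υb (k + 1)) =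
      errorMatrix D α β h • Sum.elim (εb k) (υb k) + targetNoise ι ε₀ υ₀ h (t k) := by
    rw [errorMatrix_smul_elim, targetNoise, ← hstep]
    ext (i | i)
    · exact hεb k hk i
    · exact hυb k hk i
  have hC : S * (h * max (2 * γ₁) γ₂) ≤ (S + 1) * h * max (2 * γ₁) γ₂ := by
    rw [mul_assoc]
    exact mul_le_mul_of_nonneg_right (le_add_of_nonneg_right zero_le_one)
      ((norm_nonneg _).trans (hnoise 0))
  exact (limsup_norm_le_of_sumElim_eq_smul_add (summable_norm_pow_errorMatrix hα hβ hh hD)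
    (eventually_atTop.2 ⟨1, hrec⟩) (Eventually.of_forall hnoise)).imp hC.trans' hC.trans'

end Estimator

/-- Estimator part of Theorem 4 (second-order DCEA): under `β < θ(s)` and the
sampling-period condition (5.2) `h < 2β²(θ(s) − β)/(α(ϑ(s)² + β²))` for every eigenvalue
`s` of `D` (where `θ(s) = Re(2/(1−s))`, `ϑ(s) = Im(2/(1−s))`), there is a constant
`C > 0` depending only on `n`, `D`, `α`, `β`, `h` such that for any target satisfying
Assumption A1 and any solution of the sampled-data error recursion (2.0), the estimation
errors are ultimately bounded by `C · h · max(2γ₁, γ₂)`.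
(Norms on `Fin m → ℝ` and `Fin n → Fin m → ℝ` are sup norms.) -/
theorem stmt_18 (n m : ℕ) (hn : 1 ≤ n) (hm : 1 ≤ m)
    (D : Matrix (Fin n) (Fin n) ℝ) (α β h : ℝ)
    (hα : 0 < α) (hβ : 0 < β) (hh : 0 < h)
    (heig : ∀ s ∈ (D.map (fun x => (x : ℂ))).charpoly.roots,
      s ≠ 1 ∧ β < (2 / (1 - s)).re ∧
        h < 2 * β ^ 2 * ((2 / (1 - s)).re - β) / (α * ((2 / (1 - s)).im ^ 2 + β ^ 2))) :
    ∃ C > 0, ∀ (γ₁ γ₂ : ℝ), 0 ≤ γ₁ → 0 ≤ γ₂ →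
      ∀ (ε₀ υ₀ a₀ : ℝ → Fin m → ℝ),
        (∀ t, HasDerivAt ε₀ (υ₀ t) t) → (∀ t, HasDerivAt υ₀ (a₀ t) t) →
        (∀ t, ‖υ₀ t‖ ≤ γ₁) → (∀ t, ‖a₀ t‖ ≤ γ₂) →
      ∀ (t₀ : ℝ) (t : ℕ → ℝ), (∀ k, t k = t₀ + k * h) →
      ∀ (εb υb : ℕ → Fin n → Fin m → ℝ),
        (∀ k, 1 ≤ k → ∀ i, εb (k + 1) i =
          (∑ j, (((1 - α * h) • (1 : Matrix (Fin n) (Fin n) ℝ) + (α * h) • D) i j) • εb k j)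
            + h • (∑ j, (((1 - β) • (1 : Matrix (Fin n) (Fin n) ℝ) + β • D) i j) • υb k j)
            + (ε₀ (t k) - ε₀ (t (k + 1)) + h • υ₀ (t k))) →
        (∀ k, 1 ≤ k → ∀ i, υb (k + 1) i =
          α • (∑ j, ((D - 1 : Matrix (Fin n) (Fin n) ℝ) i j) • εb k j)
            + (∑ j, (((1 - β) • (1 : Matrix (Fin n) (Fin n) ℝ) + β • D) i j) • υb k j)
            + (υ₀ (t k) - υ₀ (t (k + 1)))) →
        Filter.limsup (fun k => ‖εb k‖) Filter.atTop ≤ C * h * max (2 * γ₁) γ₂ ∧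
          Filter.limsup (fun k => ‖υb k‖) Filter.atTop ≤ C * h * max (2 * γ₁) γ₂ := by
  obtain ⟨C, hC, H⟩ := stmt_18_general D hα hβ hh fun s hs => heig s <|
    (Polynomial.mem_roots (Matrix.charpoly_monic _).ne_zero).2
      (Matrix.mem_spectrum_iff_isRoot_charpoly.1 hs)
  exact ⟨C, hC, fun γ₁ γ₂ _ _ => H (Fin m → ℝ) γ₁ γ₂⟩
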